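/- A grapht G=(V,E,I,T) admits an edge-partition into cycles and T-paths if and only if G is inner Eulerian. -/

import Mathlib

/-! Common definitions: graphts (multigraphs with terminals), walks, paths, cycles,
edge cuts, inner Eulerian graphts, path systems, linkages, Erdős–Menger cuts,
restriction (edge deletion) and contraction. -/

universe u v

/-- A *grapht*: a multigraph (no loops, parallel edges allowed) given by an incidence
function `I : E → Sym2 V`, together with a set `T` of at least two terminal vertices. -/
structure Grapht (V : Type u) (E : Type v) where
  I : E → Sym2 V
  loopless : ∀ e : E, ¬ (I e).IsDiag
  T : Set V
  T_nontrivial : T.Nontrivial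

namespace Grapht

variable {V : Type u} {E : Type v}

/-- `G.IsWalk vs es` holds when `vs` is the vertex sequence and `es` the edge sequence
of a walk in `G`. -/
inductive IsWalk (G : Grapht V E) : List V → List E → Prop
  | nil (v : V) : IsWalk G [v] []
  | cons {u w : V} {vs : List V} {e : E} {es : List E} :
      G.I e = s(u, w) → IsWalk G (w :: vs) es → IsWalk G (u :: w :: vs) (e :: es)

/-- A finite path in the grapht `G` (no repeated vertices), with endpoints `first`, `last`. -/
structure Path (G : Grapht V E) where
  first : V
  last : V
  verts : List V
  edges : List E
  isWalk : G.IsWalk verts edges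
  nodup : verts.Nodup
  head_eq : verts.head? = some first
  getLast_eq : verts.getLast? = some last

/-- A finite cycle in the grapht `G`. -/
structure Cycle (G : Grapht V E) where
  verts : List V
  edges : List E
  isWalk : G.IsWalk verts edges
  closed : verts.head? = verts.getLast?
  nontrivial : edges ≠ []
  edges_nodup : edges.Nodup
  tail_nodup : verts.tail.Nodup

variable {G : Grapht V E}

/-- The internal (inner) vertices of a path. -/
def Path.inner (P : G.Path) : List V := (P.verts.drop 1).dropLast

/-- The edge set of a path. -/
def Path.edgeSet (P : G.Path) : Set E := {e | e ∈ P.edges}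

/-- The edge set of a cycle. -/
def Cycle.edgeSet (C : G.Cycle) : Set E := {e | e ∈ C.edges}

variable (G)

/-- `δ_G(X)`: the set of edges with exactly one endpoint in `X`. -/
def edgeCut (X : Set V) : Set E :=
  {e | ∃ u w, G.I e = s(u, w) ∧ u ∈ X ∧ w ∉ X}

/-- A grapht is *inner Eulerian* if there is no `X ⊆ V ∖ T` whose cut `δ(X)` is a
finite set of odd size. -/
def InnerEulerian : Prop :=
  ∀ X : Set V, Disjoint X G.T → ¬ ((G.edgeCut X).Finite ∧ Odd (G.edgeCut X).ncard)

/-- An `AB`-path: a path with first vertex in `A`, last vertex in `B` and no internal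
vertex in `A ∪ B`. -/
def IsABPath (A B : Set V) (P : G.Path) : Prop :=
  P.first ∈ A ∧ P.last ∈ B ∧ ∀ v ∈ P.inner, v ∉ A ∪ B

/-- A `T`-path: a path between two distinct terminal vertices without internal
terminal vertices. -/
def IsTPath (P : G.Path) : Prop :=
  P.first ∈ G.T ∧ P.last ∈ G.T ∧ P.first ≠ P.last ∧ ∀ v ∈ P.inner, v ∉ G.T

/-- A system of pairwise edge-disjoint paths. -/
def EdgeDisjoint (Ps : Set G.Path) : Prop :=
  Ps.Pairwise fun P Q => ∀ e, e ∈ P.edges → e ∉ Q.edges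

/-- A system of pairwise edge-disjoint `T`-paths. -/
def IsTPathSystem (Ps : Set G.Path) : Prop :=
  G.EdgeDisjoint Ps ∧ ∀ P ∈ Ps, G.IsTPath P

/-- The set of edges used by a path system. -/
def sysEdges (Ps : Set G.Path) : Set E := ⋃ P ∈ Ps, P.edgeSet

/-- `C` is *orthogonal* to the path system `Ps`: `C` consists of exactly one edge from
each path of `Ps`. -/
def Orthogonal (C : Set E) (Ps : Set G.Path) : Prop :=
  (∀ P ∈ Ps, ∃! e, e ∈ C ∧ e ∈ P.edges) ∧ ∀ e ∈ C, ∃ P ∈ Ps, e ∈ P.edges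

/-- `C` separates `A` and `B`: every `AB`-path meets `C` (i.e. `G − C` has no `AB`-path). -/
def Separates (C : Set E) (A B : Set V) : Prop :=
  ∀ P : G.Path, G.IsABPath A B P → ∃ e ∈ C, e ∈ P.edges

/-- An `AB`-cut. -/
def IsABCut (A B : Set V) (C : Set E) : Prop :=
  ∀ P : G.Path, G.IsABPath A B P → ∃ e ∈ C, e ∈ P.edges

/-- An Erdős–Menger `AB`-cut: an `AB`-cut orthogonal to some system of pairwise
edge-disjoint `AB`-paths. -/
def IsEMABCut (A B : Set V) (C : Set E) : Prop :=
  G.IsABCut A B C ∧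
    ∃ Ps : Set G.Path, G.EdgeDisjoint Ps ∧ (∀ P ∈ Ps, G.IsABPath A B P) ∧ G.Orthogonal C Ps

/-- The order `⊴` on (Erdős–Menger) `AB`-cuts: on every `AB`-path the first edge of `C`
comes no later than the first edge of `C'`. -/
def ABCutLE (A B : Set V) (C C' : Set E) : Prop :=
  ∀ P : G.Path, G.IsABPath A B P →
    ∀ i : Fin P.edges.length, P.edges.get i ∈ C' →
      ∃ j : Fin P.edges.length, (j : ℕ) ≤ (i : ℕ) ∧ P.edges.get j ∈ C

/-- `C` is the `⊴`-largest Erdős–Menger `AB`-cut. -/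
def IsLargestEMABCut (A B : Set V) (C : Set E) : Prop :=
  G.IsEMABCut A B C ∧ ∀ C', G.IsEMABCut A B C' → G.ABCutLE A B C' C

/-- A system `Ps` of pairwise edge-disjoint `T`-paths *links* the terminal `t`:
it covers `δ(t)`. -/
def Links (Ps : Set G.Path) (t : V) : Prop :=
  G.IsTPathSystem Ps ∧ ∀ e ∈ G.edgeCut {t}, ∃ P ∈ Ps, e ∈ P.edges

/-- The terminal `t` is linked. -/
def Linked (t : V) : Prop := ∃ Ps : Set G.Path, G.Links Ps t

/-- The linkability condition: every terminal is linked. -/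
def LinkabilityCondition : Prop := ∀ t ∈ G.T, G.Linked t

/-- A perfect linkage: a system of pairwise edge-disjoint `T`-paths linking every
terminal. -/
def IsPerfectLinkage (Ps : Set G.Path) : Prop :=
  G.IsTPathSystem Ps ∧ ∀ t ∈ G.T, ∀ e ∈ G.edgeCut {t}, ∃ P ∈ Ps, e ∈ P.edges

/-- In the two-terminal setting: a system of pairwise edge-disjoint `st`-paths
covering `δ(s)` (a linkage of `s`). -/
def IsStLinkage (s t : V) (Ps : Set G.Path) : Prop :=
  G.EdgeDisjoint Ps ∧ (∀ P ∈ Ps, G.IsABPath {s} {t} P) ∧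
    ∀ e ∈ G.edgeCut {s}, ∃ P ∈ Ps, e ∈ P.edges

/-- `s` is linked (two-terminal setting). -/
def StLinked (s t : V) : Prop := ∃ Ps : Set G.Path, G.IsStLinkage s t Ps

/-- `λ_G(A,B)`: the maximal number of pairwise edge-disjoint `AB`-paths. -/
noncomputable def lambda (A B : Set V) : ℕ :=
  sSup {n : ℕ | ∃ Ps : Set G.Path, G.EdgeDisjoint Ps ∧ (∀ P ∈ Ps, G.IsABPath A B P) ∧
    Ps.Finite ∧ Ps.ncard = n}

/-- The grapht obtained by deleting all edges outside `F`. -/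
def restrict (F : Set E) : Grapht V F where
  I e := G.I e.1
  loopless e := G.loopless e.1
  T := G.T
  T_nontrivial := G.T_nontrivial

/-- The map sending every vertex of a contracted set `X t` (`t ∈ T`) to `t`. -/
noncomputable def contractMap (X : V → Set V) : V → V := fun v =>
  letI := Classical.dec (∃ u ∈ G.T, v ∈ X u)
  if h : ∃ u ∈ G.T, v ∈ X u then h.choose else v

/-- The contraction `G/ℱ` of the family `ℱ = {X t : t ∈ T}`: each `X t` is contracted
to `t` and the arising loops are deleted. -/
noncomputable def contract (X : V → Set V) :
    Grapht V {e : E // ¬ ((G.I e).map (G.contractMap X)).IsDiag} where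
  I e := (G.I e.1).map (G.contractMap X)
  loopless e := e.2
  T := G.T
  T_nontrivial := G.T_nontrivial

end Grapht

/-!
Over `𝔽₂`, give each edge the vector that is the sum of its inner endpoints. Linear functionals on
these vectors correspond to vertex sets `X ⊆ V ∖ T`, and the edges at which the functional does not
vanish form the cut `δ(X)`. Hence `G` is inner Eulerian iff its edge set is *balanced*: every
functional with finitely many nonzero values on the edges sums to zero over them.

Every edge `e` of a balanced set lies in a finite circuit of it, since otherwise some functional is
nonzero at `e` only, and removing the circuit leaves the set balanced. A countable balanced set is
therefore partitioned into circuits greedily. An uncountable one is exhausted by a well-ordered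
increasing chain of smaller sets, sufficiently closed for the successive differences to be balanced,
which reduces to the countable case by induction on the cardinality. Finally, a circuit is a cycle
or a `T`-path: a longest path in it that meets `T` at most in its last vertex can be extended at its
first vertex by a further edge of the circuit, which closes a cycle or completes a `T`-path.
-/

/-! ### Partitions into members of a class -/

/-- `HasPartition 𝒞 F` says that the set `F` is a disjoint union of members of the class `𝒞`. -/
def HasPartition {α : Type*} (𝒞 : Set (Set α)) (F : Set α) : Prop :=
  ∃ As : Set (Set α), (∀ A ∈ As, A ∈ 𝒞) ∧ As.Pairwise Disjoint ∧ ⋃₀ As = F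

namespace HasPartition

variable {α β ι : Type*} {𝒞 𝒟 : Set (Set α)} {F : Set α}

theorem of_mem (hF : F ∈ 𝒞) : HasPartition 𝒞 F :=
  ⟨{F}, by simpa using hF, Set.pairwise_singleton _ _, Set.sUnion_singleton F⟩

theorem of_pairwise_disjoint {P : ι → Set α} (hP : ∀ i, P i ∈ 𝒞)
    (hdisj : Pairwise fun i j => Disjoint (P i) (P j)) : HasPartition 𝒞 (⋃ i, P i) := by
  refine ⟨Set.range P, Set.forall_mem_range.2 hP, ?_, Set.sUnion_range P⟩
  rintro _ ⟨i, rfl⟩ _ ⟨j, rfl⟩ hne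
  exact hdisj fun hij => hne (congrArg P hij)

theorem of_filtration [LinearOrder ι] [WellFoundedLT ι] {f : ι → Set α}
    (hf : ∀ i, f i \ ⋃ j < i, f j ∈ 𝒞) : HasPartition 𝒞 (⋃ i, f i) := by
  have hcov : ⋃ i, f i = ⋃ i, f i \ ⋃ j < i, f j := by
    refine Set.Subset.antisymm (fun x hx => ?_) (Set.iUnion_mono fun i => Set.sdiff_subset)
    obtain ⟨i, hi, hmin⟩ := exists_minimal_of_wellFoundedLT _ (Set.mem_iUnion.1 hx)
    refine Set.mem_iUnion.2 ⟨i, hi, fun hxi => ?_⟩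
    obtain ⟨j, hji, hxj⟩ := Set.mem_iUnion₂.1 hxi
    exact (hmin hxj hji.le).not_gt hji
  rw [hcov]
  refine of_pairwise_disjoint hf ((pairwise_disjoint_on _).2 fun i j hij => ?_)
  exact Set.disjoint_left.2 fun x hxi hxj => hxj.2 (Set.mem_biUnion hij hxi.1)

theorem mono (h𝒞 : 𝒞 ⊆ 𝒟) (hF : HasPartition 𝒞 F) : HasPartition 𝒟 F :=
  let ⟨As, hAs, hdisj, hcov⟩ := hF
  ⟨As, fun A hA => h𝒞 (hAs A hA), hdisj, hcov⟩

theorem bind (hF : HasPartition 𝒟 F) (h𝒟 : ∀ A ∈ 𝒟, HasPartition 𝒞 A) : HasPartition 𝒞 F := by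
  obtain ⟨As, hAs, hdisj, rfl⟩ := hF
  choose! Bs hBs hBdisj hBcov using h𝒟
  have hsub {A B} (hA : A ∈ As) (hB : B ∈ Bs A) : B ⊆ A := fun x hx =>
    hBcov A (hAs A hA) ▸ Set.mem_sUnion_of_mem hx hB
  refine ⟨⋃ A ∈ As, Bs A, ?_, ?_, ?_⟩
  · simp only [Set.mem_iUnion]
    rintro B ⟨A, hA, hB⟩
    exact hBs A (hAs A hA) B hB
  · simp only [Set.Pairwise, Set.mem_iUnion]
    rintro B ⟨A, hA, hB⟩ B' ⟨A', hA', hB'⟩ hne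
    obtain rfl | hAA' := eq_or_ne A A'
    · exact hBdisj A (hAs A hA) hB hB' hne
    · exact (hdisj hA hA' hAA').mono (hsub hA hB) (hsub hA' hB')
  · simp only [Set.sUnion_iUnion]
    rw [Set.sUnion_eq_biUnion]
    exact Set.iUnion₂_congr fun A hA => hBcov A (hAs A hA)

theorem image {f : α → β} (hf : f.Injective) (hF : HasPartition 𝒞 F) :
    HasPartition (Set.image f '' 𝒞) (f '' F) := by
  obtain ⟨As, hAs, hdisj, rfl⟩ := hF
  refine ⟨Set.image f '' As, fun _ ⟨A, hA, h⟩ => ⟨A, hAs A hA, h⟩, ?_, Set.image_sUnion.symm⟩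
  rintro _ ⟨A, hA, rfl⟩ _ ⟨B, hB, rfl⟩ hne
  exact (Set.disjoint_image_iff hf).2 (hdisj hA hB fun h => hne (h ▸ rfl))

/-- Along an enumeration of `F`, each point that is not yet covered is peeled off together with a
member of `𝒞`. -/
theorem of_countable {p : Set α → Prop} (hF : F.Countable) (hp : p F)
    (peel : ∀ R, p R → ∀ x ∈ R, ∃ A ∈ 𝒞, A ⊆ R ∧ x ∈ A ∧ p (R \ A)) : HasPartition 𝒞 F := by
  obtain rfl | hne := F.eq_empty_or_nonempty
  · exact ⟨∅, by simp⟩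
  obtain ⟨x, rfl⟩ := hF.exists_eq_range hne
  have step (R : {R // p R}) (n : ℕ) : ∃ R' : {R // p R},
      R'.1 ⊆ R.1 ∧ x n ∉ R'.1 ∧ ((R.1 \ R'.1).Nonempty → R.1 \ R'.1 ∈ 𝒞) := by
    by_cases hx : x n ∈ R.1
    · obtain ⟨A, hA, hAR, hxA, hpA⟩ := peel R R.2 (x n) hx
      exact ⟨⟨R \ A, hpA⟩, Set.sdiff_subset, fun h => h.2 hxA,
        fun _ => by rwa [Set.sdiff_sdiff_cancel_left hAR]⟩
    · exact ⟨R, subset_rfl, hx, fun h => by simp at h⟩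
  choose next hsub hnotMem hmem using step
  let R : ℕ → {R // p R} := Nat.rec ⟨Set.range x, hp⟩ fun n R => next R n
  have hanti : Antitone fun n => (R n).1 := antitone_nat_of_succ_le fun n => hsub (R n) n
  refine ⟨{A ∈ Set.range fun n => (R n).1 \ (R (n + 1)).1 | A.Nonempty}, ?_, ?_, ?_⟩
  · rintro _ ⟨⟨n, rfl⟩, hA⟩
    exact hmem (R n) n hA
  · have hdisj : Pairwise (Function.onFun Disjoint fun n => (R n).1 \ (R (n + 1)).1) :=
      (pairwise_disjoint_on _).2 fun m n hmn =>
        Set.disjoint_left.2 fun y hy hy' => hy.2 (hanti hmn hy'.1)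
    rintro _ ⟨⟨m, rfl⟩, -⟩ _ ⟨⟨n, rfl⟩, -⟩ hne
    exact hdisj fun h => hne (by rw [h])
  · refine Set.Subset.antisymm (Set.sUnion_subset ?_) ?_
    · rintro _ ⟨⟨n, rfl⟩, -⟩
      exact Set.sdiff_subset.trans (hanti n.zero_le)
    · rintro _ ⟨n, rfl⟩
      have hlast : ∃ m, x n ∈ (R m).1 ∧ x n ∉ (R (m + 1)).1 := by
        by_contra! hstay
        have hall (m : ℕ) : x n ∈ (R m).1 :=
          Nat.rec (Set.mem_range_self n) (fun m hm => hstay m hm) m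
        exact hnotMem (R n) n (hall (n + 1))
      obtain ⟨m, hm⟩ := hlast
      exact Set.mem_sUnion_of_mem hm ⟨⟨m, rfl⟩, x n, hm⟩

end HasPartition

/-! ### Balanced sets of vectors -/

theorem finsum_mem_sUnion_eq_zero {α N : Type*} [AddCommMonoid N] {f : α → N} {As : Set (Set α)}
    (hdisj : As.PairwiseDisjoint id) (hAs : ∀ A ∈ As, ∑ᶠ x ∈ A, f x = 0) :
    ∑ᶠ x ∈ ⋃₀ As, f x = 0 := by
  by_cases hfin : (⋃₀ As ∩ f.support).Finite
  · have hmem (x : α) (hx : x ∈ ⋃₀ As ∩ f.support) : ∃ A ∈ As, x ∈ A := hx.1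
    choose! piece hpiece hx_mem using hmem
    set I : Set (Set α) := piece '' (⋃₀ As ∩ f.support)
    have hIAs : I ⊆ As := Set.image_subset_iff.2 hpiece
    have hcov : ⋃₀ As ∩ f.support = ⋃ A ∈ I, A ∩ f.support := by
      refine Set.Subset.antisymm (fun x hx => ?_) (Set.iUnion₂_subset fun A hA => ?_)
      · exact Set.mem_biUnion (Set.mem_image_of_mem piece hx) ⟨hx_mem x hx, hx.2⟩
      · exact Set.inter_subset_inter_left _ (Set.subset_sUnion_of_mem (hIAs hA))
    rw [← finsum_mem_inter_support, hcov, finsum_mem_biUnion]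
    · refine finsum_mem_of_eqOn_zero fun A hA => ?_
      exact (finsum_mem_inter_support f A).trans (hAs A (hIAs hA))
    · exact fun A hA B hB hne => (hdisj (hIAs hA) (hIAs hB) hne).mono Set.inter_subset_left
        Set.inter_subset_left
    · exact hfin.image piece
    · exact fun A hA => hfin.subset
        (Set.inter_subset_inter_left _ (Set.subset_sUnion_of_mem (hIAs hA)))
  · exact finsum_mem_eq_zero_of_infinite hfin

/-- A set `F` of indices of a vector family `v` is balanced if every linear functional that is
nonzero on only finitely many of the vectors `v e`, `e ∈ F`, sums to zero over them. Functionals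
with infinitely many nonzero values are exempt because `∑ᶠ` gives them the value zero. -/
def IsBalancedOn (K : Type*) {M E : Type*} [Field K] [AddCommGroup M] [Module K M] (v : E → M)
    (F : Set E) : Prop :=
  ∀ φ : Module.Dual K M, ∑ᶠ e ∈ F, φ (v e) = 0

section Balanced

open Submodule

variable {K M E : Type*} [Field K] [AddCommGroup M] [Module K M] {v : E → M} {F S : Set E}

theorem isBalancedOn_coe_finset {A : Finset E} :
    IsBalancedOn K v A ↔ ∑ e ∈ A, v e = 0 := by
  simp only [IsBalancedOn, finsum_mem_coe_finset, ← map_sum, Module.forall_dual_apply_eq_zero_iff]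

theorem isBalancedOn_image {ι : Type*} {i : ι → E} (hi : i.Injective) {A : Set ι} :
    IsBalancedOn K v (i '' A) ↔ IsBalancedOn K (v ∘ i) A := by
  simp only [IsBalancedOn, finsum_mem_image hi.injOn, Function.comp_apply]

theorem isBalancedOn_sUnion {As : Set (Set E)} (hdisj : As.Pairwise Disjoint)
    (hAs : ∀ A ∈ As, IsBalancedOn K v A) : IsBalancedOn K v (⋃₀ As) := fun φ =>
  finsum_mem_sUnion_eq_zero hdisj fun A hA => hAs A hA φ

namespace IsBalancedOn

theorem diff_finset (hF : IsBalancedOn K v F) {A : Finset E} (hAF : ↑A ⊆ F)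
    (hA : IsBalancedOn K v A) : IsBalancedOn K v (F \ A) := by
  intro φ
  by_cases hfin : (F ∩ Function.support fun e => φ (v e)).Finite
  · have hsum := finsum_mem_add_sdiff' hAF hfin
    rwa [hA φ, hF φ, zero_add] at hsum
  · refine finsum_mem_eq_zero_of_infinite fun hfin' => hfin ?_
    refine (hfin'.union A.finite_toSet).subset fun e he => ?_
    by_cases heA : e ∈ (A : Set E)
    exacts [.inr heA, .inl ⟨⟨he.1, heA⟩, he.2⟩]

/-- Modifying `φ` to vanish on the vectors outside `S` keeps its values on `S`, so its sum over `S`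
becomes a sum over `F`. -/
theorem of_forall_inf_span (hF : IsBalancedOn K v F) (hSF : S ⊆ F)
    (hS : ∀ φ : Module.Dual K M, (S ∩ Function.support fun e => φ (v e)).Finite →
      ∀ z ∈ span K (v '' S) ⊓ span K (v '' (F \ S)), φ z = 0) : IsBalancedOn K v S := by
  intro φ
  by_cases hfin : (S ∩ Function.support fun e => φ (v e)).Finite
  · have hφ : φ ∈ (span K (v '' S) ⊓ span K (v '' (F \ S))).dualAnnihilator :=
      (mem_dualAnnihilator φ).2 (hS φ hfin)
    rw [Subspace.dualAnnihilator_inf_eq] at hφ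
    obtain ⟨α, hα, ψ, hψ, rfl⟩ := mem_sup.1 hφ
    have hα' (e) (he : e ∈ S) : α (v e) = 0 :=
      (mem_dualAnnihilator α).1 hα _ (subset_span (Set.mem_image_of_mem v he))
    have hψ' (e) (he : e ∈ F \ S) : ψ (v e) = 0 :=
      (mem_dualAnnihilator ψ).1 hψ _ (subset_span (Set.mem_image_of_mem v he))
    calc ∑ᶠ e ∈ S, (α + ψ) (v e) = ∑ᶠ e ∈ S, ψ (v e) :=
          finsum_mem_congr rfl fun e he => by simp [hα' e he]
      _ = ∑ᶠ e ∈ F, ψ (v e) := finsum_mem_inter_support_eq' _ _ _ fun e he =>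
          ⟨fun h => hSF h, fun h => by_contra fun heS => he (hψ' e ⟨h, heS⟩)⟩
      _ = 0 := hF ψ
  · exact finsum_mem_eq_zero_of_infinite hfin

theorem mem_span_diff_singleton (hF : IsBalancedOn K v F) {e : E} (he : e ∈ F) :
    v e ∈ span K (v '' (F \ {e})) := by
  by_contra hspan
  obtain ⟨φ, hφe, hφ⟩ := exists_le_ker_of_notMem hspan
  have hφ' (x) (hx : x ∈ F \ {e}) : φ (v x) = 0 := hφ (subset_span (Set.mem_image_of_mem v hx))
  have hsum : ∑ᶠ x ∈ F, φ (v x) = φ (v e) := by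
    rw [← finsum_mem_singleton (f := fun x => φ (v x))]
    exact finsum_mem_inter_support_eq' _ _ _ fun x hx =>
      ⟨fun h => by_contra fun hxe => hx (hφ' x ⟨h, hxe⟩), fun h => h ▸ he⟩
  exact hφe (hsum ▸ hF φ)

end IsBalancedOn

end Balanced

/-! ### Transfinite constructions along a well-order -/

section Cardinality

open Cardinal Set

theorem mk_biUnion_le_of_countable {ι : Type u} {E : Type v} {μ : Cardinal.{v}} (hμ : ℵ₀ ≤ μ)
    {s : Set ι} (hs : s.Countable) {A : ι → Set E} (hA : ∀ i ∈ s, #(A i) ≤ μ) :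
    #(⋃ i ∈ s, A i) ≤ μ := by
  rw [← lift_le.{u}]
  refine (mk_biUnion_le_lift A s).trans (mul_le_of_le (aleph0_le_lift.2 hμ) ?_ ?_)
  · exact (lift_le_aleph0.2 hs.le_aleph0).trans (aleph0_le_lift.2 hμ)
  · exact ciSup_le' fun i => lift_le.2 (hA i i.2)

variable {E : Type v} {μ : Cardinal.{v}}

theorem mk_insert_le_of_le (hμ : ℵ₀ ≤ μ) {s : Set E} (hs : #s ≤ μ) (a : E) :
    #(insert a s : Set E) ≤ μ :=
  mk_insert_le.trans (add_le_of_le hμ hs (one_le_aleph0.trans hμ))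

theorem mk_iUnion_finset_le (hμ : ℵ₀ ≤ μ) {φ : Finset E → Set E} (hφ : ∀ t, #(φ t) ≤ μ)
    {S : Set E} (hS : #S ≤ μ) : #(⋃ t : Finset S, φ (t.map (.subtype _))) ≤ μ := by
  refine (mk_iUnion_le _).trans (mul_le_of_le hμ ?_ (ciSup_le' fun t => hφ _))
  rcases finite_or_infinite S with _ | _
  · exact mk_le_aleph0.trans hμ
  · rwa [mk_finset_of_infinite]

theorem exists_superset_mk_le_closed (hμ : ℵ₀ ≤ μ) {φ : Finset E → Set E}
    (hφ : ∀ t, #(φ t) ≤ μ) {S₀ : Set E} (hS₀ : #S₀ ≤ μ) :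
    ∃ S, S₀ ⊆ S ∧ #S ≤ μ ∧ ∀ t : Finset E, ↑t ⊆ S → φ t ⊆ S := by
  classical
  let step (S : Set E) : Set E := S ∪ ⋃ t : Finset S, φ (t.map (.subtype _))
  have hsucc (n : ℕ) : step^[n + 1] S₀ = step (step^[n] S₀) := Function.iterate_succ_apply' _ _ _
  have hmono : Monotone fun n => step^[n] S₀ :=
    monotone_nat_of_le_succ fun n => by rw [hsucc]; exact subset_union_left
  have hcard (n : ℕ) : #(step^[n] S₀ : Set E) ≤ μ := by
    induction n with
    | zero => exact hS₀
    | succ n ih =>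
      rw [hsucc]
      exact (mk_union_le _ _).trans (add_le_of_le hμ ih (mk_iUnion_finset_le hμ hφ ih))
  refine ⟨⋃ n, step^[n] S₀, subset_iUnion (fun n => step^[n] S₀) 0, ?_, fun t ht => ?_⟩
  · simpa using mk_biUnion_le_of_countable hμ countable_univ fun n _ => hcard n
  · obtain ⟨n, hn⟩ := hmono.directed_le.exists_mem_subset_of_finset_subset_biUnion ht
    refine subset_iUnion_of_subset (n + 1) ?_
    rw [hsucc, ← Finset.subtype_map_of_mem hn]
    exact subset_union_of_subset_right (subset_iUnion (fun t : Finset (step^[n] S₀ : Set E) =>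
      φ (t.map (.subtype _))) (t.subtype (· ∈ step^[n] S₀))) _

variable [LinearOrder E]

/-- The size allowed for sets constructed at stage `a` of a transfinite construction along `E`. -/
noncomputable def stageCard (a : E) : Cardinal.{v} := max ℵ₀ #(Iio a)

theorem aleph0_le_stageCard (a : E) : ℵ₀ ≤ stageCard a := le_max_left _ _

theorem mk_Iio_le_stageCard (a : E) : #(Iio a) ≤ stageCard a := le_max_right _ _

theorem stageCard_mono : Monotone (stageCard (E := E)) := fun _ _ h =>
  max_le_max le_rfl (mk_le_mk_of_subset (Iio_subset_Iio h))

theorem mk_biUnion_Iio_le_stageCard {f : E → Set E} {a : E}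
    (hf : ∀ b < a, #(f b) ≤ stageCard b) : #(⋃ b < a, f b) ≤ stageCard a :=
  (mk_biUnion_le f (Iio a)).trans <| mul_le_of_le (aleph0_le_stageCard a) (mk_Iio_le_stageCard a) <|
    ciSup_le' fun b => (hf b b.2).trans (stageCard_mono (le_of_lt b.2))

variable [WellFoundedLT E]

/-- A countable `c` is enumerated at once. An uncountable one embeds into the least initial segment
`Iio a₀` that is large enough, and its elements are enumerated along this embedding. -/
theorem exists_staging (c : Set E) : ∃ Q : E → Set E, Monotone Q ∧ (∀ a, #(Q a) ≤ stageCard a) ∧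
    ∀ a, (Iio a).Nonempty → #c ≤ stageCard a → c ⊆ ⋃ b < a, Q b := by
  by_cases hc : #c ≤ ℵ₀
  · refine ⟨fun _ => c, monotone_const, fun a => hc.trans (aleph0_le_stageCard a), ?_⟩
    exact fun a ⟨b, hb⟩ _ => subset_biUnion_of_mem (u := fun _ => c) hb
  · by_cases hlarge : ∃ a : E, #c ≤ #(Iio a)
    · obtain ⟨a₀, ha₀, hmin⟩ := exists_minimal_of_wellFoundedLT _ hlarge
      obtain ⟨g⟩ := le_def _ _ |>.1 ha₀
      refine ⟨fun b => Subtype.val '' {x | (g x : E) ≤ b}, ?_, fun b => ?_, fun a _ ha x hx => ?_⟩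
      · exact fun b b' h => image_mono fun x hx => le_trans hx h
      · have hinj : Function.Injective fun x => (g x : E) :=
          Subtype.val_injective.comp g.injective
        calc #(Subtype.val '' {x | (g x : E) ≤ b}) = #{x | (g x : E) ≤ b} :=
              mk_image_eq Subtype.val_injective
          _ ≤ #(Iic b) := mk_preimage_of_injective (fun x => (g x : E)) (Iic b) hinj
          _ ≤ stageCard b := by
              rw [← Iio_insert]
              exact mk_insert_le_of_le (aleph0_le_stageCard b) (mk_Iio_le_stageCard b) b
      · have ha' : #c ≤ #(Iio a) := (le_max_iff.1 ha).resolve_left hc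
        have hlt : (g ⟨x, hx⟩ : E) < a :=
          (g ⟨x, hx⟩).2.trans_le (le_of_not_gt fun h => (hmin ha' h.le).not_gt h)
        exact mem_biUnion (x := (g ⟨x, hx⟩ : E)) hlt ⟨⟨x, hx⟩, le_rfl, rfl⟩
    · refine ⟨fun _ => ∅, monotone_const, fun a => by simp, fun a _ ha => ?_⟩
      exact absurd ⟨a, (le_max_iff.1 ha).resolve_left hc⟩ hlarge

theorem exists_filtration {p : E → Set E → Set E → Prop}
    (hp : ∀ a (U : Set E), #U ≤ stageCard a →
      ∃ S : Set E, insert a U ⊆ S ∧ #S ≤ stageCard a ∧ p a U S) :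
    ∃ f : E → Set E, ∀ a,
      insert a (⋃ b < a, f b) ⊆ f a ∧ #(f a) ≤ stageCard a ∧ p a (⋃ b < a, f b) (f a) := by
  choose! S hS using hp
  obtain ⟨f, hf⟩ : ∃ f : E → Set E, ∀ a, f a = S a (⋃ b < a, f b) :=
    ⟨WellFounded.fix wellFounded_lt fun a f => S a (⋃ (b) (h : b < a), f b h),
      fun a => WellFounded.fix_eq _ _ _⟩
  have hcard (a : E) : #(f a) ≤ stageCard a := by
    induction a using WellFoundedLT.induction with
    | _ a ih =>
      rw [hf]
      exact (hS a _ (mk_biUnion_Iio_le_stageCard ih)).2.1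
  refine ⟨f, fun a => ?_⟩
  have hfa := hS a _ (mk_biUnion_Iio_le_stageCard fun b _ => hcard b)
  rwa [← hf] at hfa

end Cardinality

/-! ### Reduction to countable sets -/

section Filtration

open Cardinal Set Submodule

variable {K : Type*} {M : Type u} {E : Type v} [Field K] [AddCommGroup M] [Module K M] {v : E → M}

theorem mem_span_image_mono {S S' : Set E} (hSS' : S ⊆ S') {z : M}
    (hz : z ∈ span K (v '' S)) : z ∈ span K (v '' S') :=
  span_mono (image_mono hSS') hz

theorem exists_finset_mem_span_image {S : Set E} {z : M} (hz : z ∈ span K (v '' S)) :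
    ∃ D : Finset E, ↑D ⊆ S ∧ z ∈ span K (v '' D) := by
  obtain ⟨t, htS, c, rfl⟩ := (mem_span_image_iff_exists_fun K).1 hz
  exact ⟨t, htS, (mem_span_image_finset_iff_exists_fun K).2 ⟨c, rfl⟩⟩

theorem countable_span_image_finset [Countable K] (t : Finset E) :
    (span K (v '' t) : Set M).Countable := by
  refine (countable_range fun c : t → K => ∑ i, c i • v i).mono fun z hz => ?_
  exact (mem_span_image_finset_iff_exists_fun K).1 hz

theorem apply_eq_zero_of_mem_span_image {S : Set E} {z : M}
    (hz : z ∈ span K (v '' S)) {φ : Module.Dual K M} (hφ : ∀ e ∈ S, φ (v e) = 0) : φ z = 0 :=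
  (span_le (p := φ.ker)).2 (image_subset_iff.2 hφ) hz

section Separator

variable [LinearOrder E]

/-- A staged separator of `z` is an increasing family of small sets `Q a` whose union before stage
`a` separates `z` from the span of the remaining vectors, as soon as some functional with support
of the size allowed at stage `a` is nonzero at `z`. -/
structure IsStagedSeparator (K : Type*) {M E : Type*} [Field K] [AddCommGroup M] [Module K M]
    [LinearOrder E] (v : E → M) (z : M) (Q : E → Set E) : Prop where
  mono : Monotone Q
  mk_le (a : E) : #(Q a) ≤ stageCard a
  apply_eq_zero {a : E} (ha : (Iio a).Nonempty) {φ : Module.Dual K M}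
    (hφ : #(Function.support fun e => φ (v e)) ≤ stageCard a)
    (hz : z ∈ span K (v '' (⋃ b < a, Q b)ᶜ)) : φ z = 0

theorem exists_isStagedSeparator [WellFoundedLT E] (v : E → M) (z : M) :
    ∃ Q : E → Set E, IsStagedSeparator K v z Q := by
  by_cases h : ∃ φ : Module.Dual K M, φ z ≠ 0
  · obtain ⟨φ₀, hφ₀, hmin⟩ := exists_minimalFor_of_wellFoundedLT _
      (fun φ : Module.Dual K M => #(Function.support fun e => φ (v e))) h
    obtain ⟨Q, hQmono, hQcard, hQ⟩ := exists_staging (Function.support fun e => φ₀ (v e))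
    refine ⟨Q, hQmono, hQcard, fun {a} ha {φ} hφ hz => by_contra fun hφz => hφ₀ ?_⟩
    have hle : #(Function.support fun e => φ₀ (v e)) ≤ #(Function.support fun e => φ (v e)) :=
      (le_total _ _).elim id (hmin hφz)
    exact apply_eq_zero_of_mem_span_image hz fun e he =>
      by_contra fun hne => he (hQ a ha (hle.trans hφ) hne)
  · push Not at h
    exact ⟨fun _ => ∅, monotone_const, fun a => by simp, fun _ φ _ _ => h φ⟩

/-- Let `U = ⋃ b < a, f b`. A functional with finite support off `U` has support of size at most
`stageCard a`, and every `z` in the span of `U` has its separator up to stage `a` inside `U`. So the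
functional vanishes at `z` if `z` is also spanned by the vectors off `U`. -/
theorem IsBalancedOn.compl_biUnion_lt (hv : IsBalancedOn K v Set.univ) {f : E → Set E}
    (hf : Monotone f) (hfcard : ∀ a, #(f a) ≤ stageCard a) {Q : M → E → Set E}
    (hQ : ∀ z, IsStagedSeparator K v z (Q z)) (hQf : ∀ a, ∀ z ∈ span K (v '' f a), Q z a ⊆ f a)
    (a : E) : IsBalancedOn K v (⋃ b < a, f b)ᶜ := by
  refine hv.of_forall_inf_span (subset_univ _) fun φ hφ z hz => ?_
  rw [← compl_eq_univ_sdiff, compl_compl] at hz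
  obtain ⟨hzc, hzU⟩ := hz
  obtain ha | ha := (Iio a).eq_empty_or_nonempty
  · have hU : ⋃ b < a, f b = ∅ := by simp [← mem_Iio, ha]
    exact apply_eq_zero_of_mem_span_image hzU fun e he => absurd he (hU ▸ notMem_empty e)
  have hcard : #(Function.support fun e => φ (v e)) ≤ stageCard a := by
    set N := Function.support fun e => φ (v e)
    set U := ⋃ b < a, f b
    have hN : N ⊆ U ∪ (Uᶜ ∩ N) := fun e he => (em (e ∈ U)).imp id fun heU => ⟨heU, he⟩
    refine (mk_le_mk_of_subset hN).trans ((mk_union_le _ _).trans ?_)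
    exact add_le_of_le (aleph0_le_stageCard a) (mk_biUnion_Iio_le_stageCard fun b _ => hfcard b)
      (hφ.countable.le_aleph0.trans (aleph0_le_stageCard a))
  refine (hQ z).apply_eq_zero ha hcard (mem_span_image_mono (compl_subset_compl.2 ?_) hzc)
  obtain ⟨D, hDU, hzD⟩ := exists_finset_mem_span_image hzU
  obtain ⟨b, hba, hDb⟩ := DirectedOn.exists_mem_subset_of_finset_subset_biUnion ha
    (fun i hi j hj => ⟨max i j, max_lt hi hj, hf (le_max_left i j), hf (le_max_right i j)⟩) hDU
  refine iUnion₂_subset fun c hca => ?_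
  have hzf : z ∈ span K (v '' f (max b c)) :=
    mem_span_image_mono (hDb.trans (hf (le_max_left b c))) hzD
  exact ((hQ z).mono (le_max_right b c)).trans ((hQf _ z hzf).trans
    (subset_biUnion_of_mem (u := f) (max_lt hba hca)))

end Separator

/-- `IsReflecting K v U S`: whether a vector spanned by `S` is spanned by the vectors outside `U`,
even after removal of a finite subset of `S`, can be decided inside `S`. -/
def IsReflecting (K : Type*) {M E : Type*} [Field K] [AddCommGroup M] [Module K M] (v : E → M)
    (U S : Set E) : Prop :=
  ∀ z ∈ span K (v '' S), ∀ C : Finset E, ↑C ⊆ S →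
    z ∈ span K (v '' (Uᶜ \ C)) → z ∈ span K (v '' ((S \ U) \ C))

theorem IsBalancedOn.diff_of_isReflecting {U S : Set E} (hU : IsBalancedOn K v Uᶜ)
    (hS : IsReflecting K v U S) : IsBalancedOn K v (S \ U) := by
  refine hU.of_forall_inf_span (fun e he => he.2) fun φ hφ z hz => ?_
  set C := hφ.toFinset
  have hCS : ↑C ⊆ S \ U := fun e he => (hφ.mem_toFinset.1 he).1
  have hmem : z ∈ span K (v '' ((S \ U) \ C)) :=
    hS z (mem_span_image_mono sdiff_subset hz.1) C (hCS.trans sdiff_subset)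
      (mem_span_image_mono (sdiff_subset_sdiff_right hCS) hz.2)
  exact apply_eq_zero_of_mem_span_image hmem fun e he =>
    by_contra fun hne => he.2 (hφ.mem_toFinset.2 ⟨he.1, hne⟩)

theorem exists_isReflecting [Countable K] {μ : Cardinal.{v}} (hμ : ℵ₀ ≤ μ) (v : E → M)
    {Q : M → Set E} (hQ : ∀ z, #(Q z) ≤ μ) (U : Set E) {S₀ : Set E} (hS₀ : #S₀ ≤ μ) :
    ∃ S : Set E, S₀ ⊆ S ∧ #S ≤ μ ∧ (∀ z ∈ span K (v '' S), Q z ⊆ S) ∧ IsReflecting K v U S := by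
  have hwit (z : M) (C : Finset E) : ∃ D : Finset E,
      z ∈ span K (v '' (Uᶜ \ C)) → ↑D ⊆ Uᶜ \ ↑C ∧ z ∈ span K (v '' D) := by
    by_cases hz : z ∈ span K (v '' (Uᶜ \ C))
    · exact (exists_finset_mem_span_image hz).imp fun D hD _ => hD
    · exact ⟨∅, fun h => absurd h hz⟩
  choose D hD using hwit
  let φ (t : Finset E) : Set E := ⋃ z ∈ span K (v '' t), (Q z ∪ ⋃ C ∈ t.powerset, D z C)
  have hφ (t : Finset E) : #(φ t) ≤ μ := by
    refine mk_biUnion_le_of_countable hμ (countable_span_image_finset t) fun z _ => ?_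
    refine (mk_union_le _ _).trans (add_le_of_le hμ (hQ z) ?_)
    refine (Countable.le_aleph0 ?_).trans hμ
    exact t.powerset.countable_toSet.biUnion fun C _ => (D z C).countable_toSet
  obtain ⟨S, hS₀S, hS, hclosed⟩ := exists_superset_mk_le_closed hμ hφ hS₀
  refine ⟨S, hS₀S, hS, fun z hz => ?_, fun z hz C hCS hzC => ?_⟩
  all_goals obtain ⟨t, htS, hzt⟩ := exists_finset_mem_span_image hz
  · exact fun e he => hclosed t htS (mem_biUnion hzt (.inl he))
  · classical
    have hDS : ↑(D z C) ⊆ S := fun e he => by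
      refine hclosed (t ∪ C) (by simp [htS, hCS]) (mem_biUnion (x := z) ?_ (.inr ?_))
      · exact mem_span_image_mono (by simp) hzt
      · exact mem_biUnion (x := C) (Finset.mem_powerset.2 Finset.subset_union_right) he
    obtain ⟨hDU, hzD⟩ := hD z C hzC
    have hDSUC : ↑(D z C) ⊆ (S \ U) \ C := fun e he => ⟨⟨hDS he, (hDU he).1⟩, (hDU he).2⟩
    exact mem_span_image_mono hDSUC hzD

theorem IsBalancedOn.hasPartition_of_aleph0_lt [Countable K] (hv : IsBalancedOn K v Set.univ)
    (hE : ℵ₀ < #E) : HasPartition {A | #A < #E ∧ IsBalancedOn K v A} Set.univ := by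
  obtain ⟨_, _, hord⟩ := exists_ord_eq_type_lt E
  choose Q hQ using exists_isStagedSeparator (K := K) v
  obtain ⟨f, hf⟩ := exists_filtration (E := E)
    (p := fun a U S => (∀ z ∈ span K (v '' S), Q z a ⊆ S) ∧ IsReflecting K v U S)
    fun a U hU => exists_isReflecting (aleph0_le_stageCard a) v (fun z => (hQ z).mk_le a) U
      (mk_insert_le_of_le (aleph0_le_stageCard a) hU a)
  choose hsub hcard hQf hrefl using hf
  have hUf (a : E) : ⋃ b < a, f b ⊆ f a := (subset_insert _ _).trans (hsub a)
  have hmono : Monotone f := monotone_iff_forall_lt.2 fun b a hba =>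
    (subset_biUnion_of_mem (u := f) (mem_Iio.2 hba)).trans (hUf a)
  have huniv : ⋃ a, f a = Set.univ :=
    eq_univ_of_forall fun a => mem_iUnion.2 ⟨a, hsub a (mem_insert a _)⟩
  rw [← huniv]
  refine .of_filtration fun a => ⟨?_, ?_⟩
  · exact (mk_le_mk_of_subset sdiff_subset).trans_lt
      ((hcard a).trans_lt (max_lt hE (mk_Iio_lt a hord)))
  · exact (hv.compl_biUnion_lt hmono hcard hQ hQf a).diff_of_isReflecting (hrefl a)

theorem IsBalancedOn.hasPartition_countable [Countable K] {F : Set E} (hF : IsBalancedOn K v F) :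
    HasPartition {A | A.Countable ∧ IsBalancedOn K v A} F := by
  induction hκ : #F using WellFoundedLT.induction generalizing F with
  | _ κ ih =>
  obtain hcount | hunc := le_or_gt #F ℵ₀
  · exact .of_mem ⟨le_aleph0_iff_set_countable.1 hcount, hF⟩
  · rw [← Subtype.coe_image_univ F, isBalancedOn_image Subtype.val_injective] at hF
    have hpart := (hF.hasPartition_of_aleph0_lt hunc).image Subtype.val_injective
    rw [Subtype.coe_image_univ F] at hpart
    refine hpart.bind ?_
    rintro _ ⟨A, ⟨hAcard, hA⟩, rfl⟩
    refine ih _ ?_ ((isBalancedOn_image Subtype.val_injective).2 hA) rfl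
    rwa [mk_image_eq Subtype.val_injective, ← hκ]

end Filtration

/-! ### Circuits over `𝔽₂` -/

section Circuit

/-- A circuit of a family `v` of vectors over `𝔽₂`, in the sense of matroid theory: a minimal
nonempty finite set of indices whose vectors sum to zero. -/
def IsCircuit {M E : Type*} [AddCommMonoid M] (v : E → M) (A : Finset E) : Prop :=
  Minimal (fun B : Finset E => B.Nonempty ∧ ∑ e ∈ B, v e = 0) A

variable {M : Type u} {E : Type v} [AddCommGroup M] {v : E → M}

theorem exists_isCircuit_mem_of_sum_eq_zero {A : Finset E} (hA : ∑ e ∈ A, v e = 0) {e : E}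
    (he : e ∈ A) : ∃ C ⊆ A, e ∈ C ∧ IsCircuit v C := by
  classical
  obtain ⟨C, hCA, hC⟩ := exists_minimal_le_of_wellFoundedLT
    (fun B : Finset E => e ∈ B ∧ ∑ x ∈ B, v x = 0) A ⟨he, hA⟩
  refine ⟨C, hCA, hC.prop.1, ⟨⟨e, hC.prop.1⟩, hC.prop.2⟩, fun B ⟨hBne, hB⟩ hBC => ?_⟩
  by_cases heB : e ∈ B
  · exact hC.2 ⟨heB, hB⟩ hBC
  · have hdiff : ∑ x ∈ C \ B, v x = 0 := by
      rw [Finset.sum_sdiff_eq_sub hBC, hC.prop.2, hB, sub_zero]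
    have hle := hC.2 ⟨Finset.mem_sdiff.2 ⟨hC.prop.1, heB⟩, hdiff⟩ Finset.sdiff_subset
    obtain ⟨x, hx⟩ := hBne
    exact absurd hx (Finset.mem_sdiff.1 (hle (hBC hx))).2

variable [Module (ZMod 2) M]

theorem exists_finset_sum_eq_of_mem_span_image {S : Set E} {z : M}
    (hz : z ∈ Submodule.span (ZMod 2) (v '' S)) : ∃ A : Finset E, ↑A ⊆ S ∧ ∑ e ∈ A, v e = z := by
  obtain ⟨t, htS, c, rfl⟩ := (Submodule.mem_span_image_iff_exists_fun (ZMod 2)).1 hz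
  classical
  refine ⟨(t.attach.filter (c · ≠ 0)).map (.subtype _), fun e he => ?_, ?_⟩
  · obtain ⟨e', -, rfl⟩ := Finset.mem_map.1 he
    exact htS e'.2
  · rw [Finset.sum_map, Finset.sum_filter, Finset.univ_eq_attach]
    refine Finset.sum_congr rfl fun e _ => ?_
    obtain h | h := (by decide : ∀ r : ZMod 2, r = 0 ∨ r = 1) (c e) <;> simp [h]

theorem IsBalancedOn.exists_isCircuit_mem {F : Set E} (hF : IsBalancedOn (ZMod 2) v F) {e : E}
    (he : e ∈ F) : ∃ C : Finset E, ↑C ⊆ F ∧ e ∈ C ∧ IsCircuit v C := by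
  classical
  obtain ⟨A, hAF, hA⟩ := exists_finset_sum_eq_of_mem_span_image (hF.mem_span_diff_singleton he)
  have heA : e ∉ A := fun h => (hAF h).2 rfl
  have hsum : ∑ x ∈ insert e A, v x = 0 := by
    rw [Finset.sum_insert heA, hA, ZModModule.add_self]
  obtain ⟨C, hCA, heC, hC⟩ := exists_isCircuit_mem_of_sum_eq_zero hsum (Finset.mem_insert_self e A)
  refine ⟨C, fun x hx => ?_, heC, hC⟩
  obtain rfl | hxA := Finset.mem_insert.1 (hCA hx)
  exacts [he, (hAF hxA).1]

theorem IsBalancedOn.hasPartition_isCircuit {F : Set E} (hF : IsBalancedOn (ZMod 2) v F) :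
    HasPartition {A | ∃ C : Finset E, IsCircuit v C ∧ A = C} F := by
  refine hF.hasPartition_countable.bind fun A ⟨hAcount, hA⟩ => ?_
  refine .of_countable hAcount hA fun R hR x hx => ?_
  obtain ⟨C, hCR, hxC, hC⟩ := hR.exists_isCircuit_mem hx
  exact ⟨C, ⟨C, hC, rfl⟩, hCR, hxC, hR.diff_finset hCR (isBalancedOn_coe_finset.2 hC.prop.2)⟩

end Circuit

/-! ### The boundary map of a grapht -/

theorem finsum_eq_ncard_support {α : Type*} (f : α → ZMod 2) :
    ∑ᶠ a, f a = (f.support.ncard : ZMod 2) := by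
  by_cases hf : f.support.Finite
  · rw [finsum_eq_sum f hf, Set.ncard_eq_toFinset_card _ hf, Finset.card_eq_sum_ones, Nat.cast_sum]
    refine Finset.sum_congr rfl fun a ha => ?_
    rw [Nat.cast_one]
    exact Fin.eq_one_of_ne_zero _ (hf.mem_toFinset.1 ha)
  · rw [finsum_of_infinite_support hf, Set.Infinite.ncard hf, Nat.cast_zero]

namespace Grapht

section Boundary

variable {V : Type u} {E : Type v} (G : Grapht V E)

open Classical in
/-- The vector over `𝔽₂` representing the vertex `x` in the boundary of an edge: the basis vector
of an inner vertex, and zero for a terminal vertex. -/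
noncomputable def vertexVector (x : V) : V →₀ ZMod 2 :=
  if x ∈ G.T then 0 else Finsupp.single x 1

/-- The boundary over `𝔽₂` of an edge relative to the terminal vertices. -/
noncomputable def boundary (e : E) : V →₀ ZMod 2 :=
  Sym2.lift ⟨fun a b => G.vertexVector a + G.vertexVector b, fun _ _ => add_comm _ _⟩ (G.I e)

variable {G}

theorem vertexVector_of_mem {x : V} (hx : x ∈ G.T) : G.vertexVector x = 0 := if_pos hx

theorem vertexVector_of_notMem {x : V} (hx : x ∉ G.T) :
    G.vertexVector x = Finsupp.single x 1 := if_neg hx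

theorem boundary_eq_add {e : E} {a b : V} (h : G.I e = s(a, b)) :
    G.boundary e = G.vertexVector a + G.vertexVector b := by
  rw [boundary, h, Sym2.lift_mk]

theorem mem_edgeCut_iff {e : E} {a b : V} (h : G.I e = s(a, b)) {X : Set V} :
    e ∈ G.edgeCut X ↔ ¬(a ∈ X ↔ b ∈ X) := by
  simp only [edgeCut, Set.mem_ofPred_eq, h, Sym2.eq_iff]
  grind

theorem support_apply_boundary (φ : Module.Dual (ZMod 2) (V →₀ ZMod 2)) :
    (Function.support fun e => φ (G.boundary e)) = G.edgeCut {x | φ (G.vertexVector x) ≠ 0} := by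
  ext e
  obtain ⟨a, b, hab⟩ := Sym2.exists.1 ⟨G.I e, rfl⟩
  rw [mem_edgeCut_iff hab, Function.mem_support, boundary_eq_add hab, map_add]
  simp only [Set.mem_ofPred_eq]
  generalize φ (G.vertexVector a) = r, φ (G.vertexVector b) = s
  revert r s
  decide

theorem exists_dual_apply_vertexVector_ne_zero_eq {X : Set V} (hX : Disjoint X G.T) :
    ∃ φ : Module.Dual (ZMod 2) (V →₀ ZMod 2), {x | φ (G.vertexVector x) ≠ 0} = X := by
  classical
  refine ⟨Finsupp.linearCombination (ZMod 2) (X.indicator 1), ?_⟩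
  ext x
  by_cases hxT : x ∈ G.T
  · simp [vertexVector_of_mem hxT, hX.notMem_of_mem_right hxT]
  · simp [vertexVector_of_notMem hxT]

theorem innerEulerian_iff_isBalancedOn_boundary :
    G.InnerEulerian ↔ IsBalancedOn (ZMod 2) G.boundary Set.univ := by
  have hsum (φ : Module.Dual (ZMod 2) (V →₀ ZMod 2)) : ∑ᶠ e ∈ Set.univ, φ (G.boundary e) = 0 ↔
      Even (G.edgeCut {x | φ (G.vertexVector x) ≠ 0}).ncard := by
    rw [finsum_mem_univ, finsum_eq_ncard_support, support_apply_boundary,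
      ZMod.natCast_eq_zero_iff_even]
  refine ⟨fun hG φ => (hsum φ).2 (Nat.not_odd_iff_even.1 fun hodd => ?_), fun hG X hX hodd => ?_⟩
  · have hdisj : Disjoint {x | φ (G.vertexVector x) ≠ 0} G.T :=
      Set.disjoint_left.2 fun x hx hxT => hx (by rw [vertexVector_of_mem hxT, map_zero])
    exact hG _ hdisj ⟨Set.finite_of_ncard_pos hodd.pos, hodd⟩
  · obtain ⟨φ, rfl⟩ := exists_dual_apply_vertexVector_ne_zero_eq hX
    exact Nat.not_even_iff_odd.2 hodd.2 ((hsum φ).1 (hG φ))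

end Boundary

section Walk

variable {V : Type u} {E : Type v} {G : Grapht V E}

namespace IsWalk

variable {vs : List V} {es : List E}

theorem exists_head?_eq_some (h : G.IsWalk vs es) : ∃ a, vs.head? = some a := by
  cases h <;> exact ⟨_, rfl⟩

theorem sum_map_boundary (h : G.IsWalk vs es) {a b : V} (ha : vs.head? = some a)
    (hb : vs.getLast? = some b) :
    (es.map G.boundary).sum = G.vertexVector a + G.vertexVector b := by
  induction h generalizing a with
  | nil x =>
    obtain rfl : x = a := by simpa using ha
    obtain rfl : x = b := by simpa using hb
    simp [ZModModule.add_self]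
  | @cons x y vs e es hxy _ ih =>
    obtain rfl : x = a := by simpa using ha
    rw [List.map_cons, List.sum_cons, ih rfl (by simpa using hb), boundary_eq_add hxy, add_assoc,
      ← add_assoc (G.vertexVector y), ZModModule.add_self, zero_add]

theorem mem_verts (h : G.IsWalk vs es) {e : E} (he : e ∈ es) {x : V} (hx : x ∈ G.I e) :
    x ∈ vs := by
  induction h with
  | nil => simp at he
  | @cons a b vs e' es hab _ ih =>
    obtain rfl | he := List.mem_cons.1 he
    · obtain rfl | rfl := Sym2.mem_iff.1 (hab ▸ hx) <;> simp
    · exact List.mem_cons_of_mem _ (ih he)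

theorem nodup_edges (h : G.IsWalk vs es) (hvs : vs.Nodup) : es.Nodup := by
  induction h with
  | nil => exact List.nodup_nil
  | @cons a b vs e es hab hw ih =>
    obtain ⟨ha, hvs⟩ := List.nodup_cons.1 hvs
    refine List.nodup_cons.2 ⟨fun he => ha (hw.mem_verts he ?_), ih hvs⟩
    exact hab ▸ Sym2.mem_mk_left a b

theorem cons_of_head? (h : G.IsWalk vs es) {e : E} {a b : V} (hb : vs.head? = some b)
    (hab : G.I e = s(a, b)) : G.IsWalk (a :: vs) (e :: es) := by
  obtain ⟨vs', rfl⟩ := List.head?_eq_some_iff.1 hb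
  exact cons hab h

theorem exists_prefix_isWalk (h : G.IsWalk vs es) {z : V} (hz : z ∈ vs) :
    ∃ us fs, G.IsWalk us fs ∧ us <+: vs ∧ fs <+: es ∧ us.head? = vs.head? ∧
      us.getLast? = some z := by
  induction h with
  | nil x =>
    obtain rfl := List.mem_singleton.1 hz
    exact ⟨[z], [], nil z, List.prefix_rfl, List.prefix_rfl, rfl, rfl⟩
  | @cons a b vs e es hab _ ih =>
    obtain rfl | hz := List.mem_cons.1 hz
    · exact ⟨[z], [], nil z, by simp, List.nil_prefix, rfl, rfl⟩
    · obtain ⟨us, fs, hw, hus, hfs, hhead, hlast⟩ := ih hz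
      refine ⟨a :: us, e :: fs, hw.cons_of_head? hhead hab, (List.prefix_cons_inj a).2 hus,
        (List.prefix_cons_inj e).2 hfs, rfl, ?_⟩
      simp [List.getLast?_cons, hlast]

end IsWalk

theorem IsWalk.isBalancedOn_boundary {vs : List V} {es : List E} (h : G.IsWalk vs es)
    (hes : es.Nodup) {a b : V} (ha : vs.head? = some a) (hb : vs.getLast? = some b)
    (hab : G.vertexVector a + G.vertexVector b = 0) :
    IsBalancedOn (ZMod 2) G.boundary {e | e ∈ es} := by
  classical
  rw [← List.coe_toFinset, isBalancedOn_coe_finset, List.sum_toFinset _ hes,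
    h.sum_map_boundary ha hb, hab]

/-- The edge sets of the cycles and of the `T`-paths of `G`. -/
def IsCycleOrTPath (G : Grapht V E) (A : Set E) : Prop :=
  (∃ C : G.Cycle, A = C.edgeSet) ∨ ∃ P : G.Path, G.IsTPath P ∧ A = P.edgeSet

theorem IsCycleOrTPath.isBalancedOn_boundary {A : Set E} (hA : G.IsCycleOrTPath A) :
    IsBalancedOn (ZMod 2) G.boundary A := by
  obtain ⟨C, rfl⟩ | ⟨P, hP, rfl⟩ := hA
  · obtain ⟨a, ha⟩ := C.isWalk.exists_head?_eq_some
    exact C.isWalk.isBalancedOn_boundary C.edges_nodup ha (C.closed ▸ ha) (ZModModule.add_self _)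
  · refine P.isWalk.isBalancedOn_boundary (P.isWalk.nodup_edges P.nodup) P.head_eq P.getLast_eq ?_
    rw [vertexVector_of_mem hP.1, vertexVector_of_mem hP.2.1, add_zero]

end Walk

/-! ### Circuits of the boundary map -/

section Segment

variable {V : Type u} {E : Type v} {G : Grapht V E}

theorem vertexVector_apply_of_ne {x y : V} (hxy : x ≠ y) : G.vertexVector x y = 0 := by
  rw [vertexVector]
  split_ifs
  exacts [rfl, Finsupp.single_eq_of_ne hxy.symm]

theorem boundary_apply_of_notMem {e : E} {x : V} (hx : x ∉ G.I e) : G.boundary e x = 0 := by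
  obtain ⟨a, b, hab⟩ := Sym2.exists.1 ⟨G.I e, rfl⟩
  have hax : a ≠ x := fun h => hx (hab ▸ h ▸ Sym2.mem_mk_left a b)
  have hbx : b ≠ x := fun h => hx (hab ▸ h ▸ Sym2.mem_mk_right a b)
  rw [boundary_eq_add hab, Finsupp.add_apply, vertexVector_apply_of_ne hax,
    vertexVector_apply_of_ne hbx, add_zero]

namespace Path

variable (P : G.Path)

theorem first_mem_verts : P.first ∈ P.verts := List.mem_of_head? P.head_eq

theorem last_mem_verts : P.last ∈ P.verts := List.mem_of_getLast? P.getLast_eq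

theorem nodup_edges : P.edges.Nodup := P.isWalk.nodup_edges P.nodup

variable {P} in
theorem edges_eq_nil_of_first_eq_last (h : P.first = P.last) : P.edges = [] := by
  obtain ⟨a, b, vs, es, hw, hnd, ha, hb⟩ := P
  obtain rfl : a = b := h
  cases hw with
  | nil => rfl
  | @cons x y vs e es _ _ =>
    obtain rfl : x = a := by simpa using ha
    rw [List.getLast?_cons_cons] at hb
    exact absurd (List.mem_of_getLast? hb) (List.nodup_cons.1 hnd).1

/-- The path consisting of a single vertex. -/
def single (G : Grapht V E) (x : V) : G.Path where
  first := x
  last := x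
  verts := [x]
  edges := []
  isWalk := .nil x
  nodup := List.nodup_singleton x
  head_eq := rfl
  getLast_eq := rfl

/-- The extension of a path by an edge to a new first vertex. -/
def cons {e : E} {z : V} (hez : G.I e = s(z, P.first)) (hz : z ∉ P.verts) : G.Path where
  first := z
  last := P.last
  verts := z :: P.verts
  edges := e :: P.edges
  isWalk := P.isWalk.cons_of_head? P.head_eq hez
  nodup := List.nodup_cons.2 ⟨hz, P.nodup⟩
  head_eq := rfl
  getLast_eq := by simp [List.getLast?_cons, P.getLast_eq]

theorem exists_cycle_edgeSet_subset {e : E} {z : V} (hez : G.I e = s(z, P.first))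
    (hz : z ∈ P.verts) (he : e ∉ P.edges) : ∃ C : G.Cycle, C.edgeSet ⊆ insert e P.edgeSet := by
  obtain ⟨us, fs, hw, hus, hfs, hhead, hlast⟩ := P.isWalk.exists_prefix_isWalk hz
  refine ⟨{ verts := z :: us
            edges := e :: fs
            isWalk := hw.cons_of_head? (hhead.trans P.head_eq) hez
            closed := by simp [List.getLast?_cons, hlast]
            nontrivial := List.cons_ne_nil e fs
            edges_nodup := List.nodup_cons.2
              ⟨fun h => he (hfs.subset h), P.nodup_edges.sublist hfs.sublist⟩
            tail_nodup := P.nodup.sublist hus.sublist }, fun x hx => ?_⟩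
  exact (List.mem_cons.1 hx).imp id fun h => hfs.subset h

end Path

/-- A final segment of a potential `T`-path with edges in `A`: a path with at most its last vertex
in `T`. The last vertex is not isolated in `A`, and it lies in `T` unless `A` avoids `T`. -/
structure IsTPathSegment (G : Grapht V E) (A : Finset E) (P : G.Path) : Prop where
  edges_subset : ∀ e ∈ P.edges, e ∈ A
  eq_last : ∀ x ∈ P.verts, x ∈ G.T → x = P.last
  last_mem : ∀ e ∈ A, ∀ x ∈ G.I e, x ∈ G.T → P.last ∈ G.T
  exists_mem : ∃ e ∈ A, P.last ∈ G.I e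

theorem exists_isTPathSegment {A : Finset E} (hA : A.Nonempty) :
    ∃ P : G.Path, G.IsTPathSegment A P := by
  have hsingle (x : V) : ∀ y ∈ (Path.single G x).verts, y ∈ G.T → y = x :=
    fun y hy _ => List.mem_singleton.1 hy
  by_cases h : ∃ e ∈ A, ∃ x ∈ G.I e, x ∈ G.T
  · obtain ⟨e, he, x, hx, hxT⟩ := h
    exact ⟨.single G x, by simp [Path.single], hsingle x, fun _ _ _ _ _ => hxT, e, he, hx⟩
  · push Not at h
    obtain ⟨e, he⟩ := hA
    obtain ⟨a, b, hab⟩ := Sym2.exists.1 ⟨G.I e, rfl⟩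
    exact ⟨.single G a, by simp [Path.single], hsingle a,
      fun e he x hx hxT => absurd hxT (h e he x hx), e, he, hab ▸ Sym2.mem_mk_left a b⟩

namespace IsTPathSegment

variable {A : Finset E} {P : G.Path}

theorem length_le (hP : G.IsTPathSegment A P) : P.edges.length ≤ A.card := by
  classical
  rw [← List.toFinset_card_of_nodup P.nodup_edges]
  exact Finset.card_le_card fun e he => hP.edges_subset e (List.mem_toFinset.1 he)

theorem exists_edge_notMem (hP : G.IsTPathSegment A P) (hA : ∑ e ∈ A, G.boundary e = 0) :
    ∃ e ∈ A, e ∉ P.edges ∧ P.first ∈ G.I e := by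
  classical
  by_cases hfl : P.first = P.last
  · rw [Path.edges_eq_nil_of_first_eq_last hfl, hfl]
    simpa using hP.exists_mem
  · by_contra! h
    have hfirstT : P.first ∉ G.T := fun hT => hfl (hP.eq_last _ P.first_mem_verts hT)
    have hsum : ∑ e ∈ P.edges.toFinset, G.boundary e P.first =
        ∑ e ∈ A, G.boundary e P.first :=
      Finset.sum_subset (fun e he => hP.edges_subset e (List.mem_toFinset.1 he)) fun e he he' =>
        boundary_apply_of_notMem (h e he fun hmem => he' (List.mem_toFinset.2 hmem))
    rw [← Finsupp.finsetSum_apply, ← Finsupp.finsetSum_apply, hA,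
      List.sum_toFinset _ P.nodup_edges, P.isWalk.sum_map_boundary P.head_eq P.getLast_eq,
      Finsupp.add_apply, vertexVector_of_notMem hfirstT, Finsupp.single_eq_same,
      vertexVector_apply_of_ne (Ne.symm hfl)] at hsum
    exact one_ne_zero hsum

theorem cons (hP : G.IsTPathSegment A P) {e : E} (he : e ∈ A) {z : V}
    (hez : G.I e = s(z, P.first)) (hz : z ∉ P.verts) (hzT : z ∉ G.T) :
    G.IsTPathSegment A (P.cons hez hz) where
  edges_subset := List.forall_mem_cons.2 ⟨he, hP.edges_subset⟩
  eq_last := List.forall_mem_cons.2 ⟨fun h => absurd h hzT, hP.eq_last⟩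
  last_mem := hP.last_mem
  exists_mem := hP.exists_mem

theorem isTPath_cons (hP : G.IsTPathSegment A P) {e : E} (he : e ∈ A) {z : V}
    (hez : G.I e = s(z, P.first)) (hz : z ∉ P.verts) (hzT : z ∈ G.T) :
    G.IsTPath (P.cons hez hz) := by
  refine ⟨hzT, hP.last_mem e he z (hez ▸ Sym2.mem_mk_left z _) hzT,
    ?_, fun x hx hxT => ?_⟩
  · rintro (rfl : z = P.last)
    exact hz P.last_mem_verts
  have hx' : x ∈ P.verts.dropLast := hx
  obtain rfl := hP.eq_last x (List.mem_of_mem_dropLast hx') hxT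
  have hnodup := P.nodup
  rw [← List.dropLast_append_getLast? _ P.getLast_eq] at hnodup
  exact (List.nodup_append.1 hnodup).2.2 _ hx' _ (List.mem_singleton_self _) rfl

end IsTPathSegment

theorem exists_isCycleOrTPath_subset {A : Finset E} (hne : A.Nonempty)
    (hA : ∑ e ∈ A, G.boundary e = 0) : ∃ B ⊆ (A : Set E), B.Nonempty ∧ G.IsCycleOrTPath B := by
  have hbdd : ((·.edges.length) '' {P | G.IsTPathSegment A P}).Finite :=
    (Set.finite_Iic A.card).subset (Set.image_subset_iff.2 fun _ hP => hP.length_le)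
  obtain ⟨P, hP, hmax⟩ := Set.Finite.exists_maximalFor' _ _ hbdd (exists_isTPathSegment hne)
  obtain ⟨e, heA, heP, hfirst⟩ := hP.exists_edge_notMem hA
  obtain ⟨z, hz⟩ := Sym2.mem_iff_exists.1 hfirst
  have hez : G.I e = s(z, P.first) := hz.trans Sym2.eq_swap
  by_cases hzP : z ∈ P.verts
  · obtain ⟨C, hC⟩ := P.exists_cycle_edgeSet_subset hez hzP heP
    exact ⟨C.edgeSet, hC.trans (Set.insert_subset heA hP.edges_subset),
      List.exists_mem_of_ne_nil _ C.nontrivial, .inl ⟨C, rfl⟩⟩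
  · by_cases hzT : z ∈ G.T
    · exact ⟨(P.cons hez hzP).edgeSet, List.forall_mem_cons.2 ⟨heA, hP.edges_subset⟩,
        ⟨e, List.mem_cons_self⟩, .inr ⟨_, hP.isTPath_cons heA hez hzP hzT, rfl⟩⟩
    · have hle := hmax (hP.cons heA hez hzP hzT)
      simp [Path.cons] at hle

theorem isCycleOrTPath_of_isCircuit {A : Finset E} (hA : IsCircuit G.boundary A) :
    G.IsCycleOrTPath A := by
  obtain ⟨B, hBA, hBne, hB⟩ := exists_isCycleOrTPath_subset hA.prop.1 hA.prop.2
  lift B to Finset E using A.finite_toSet.subset hBA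
  have hsum := isBalancedOn_coe_finset.1 hB.isBalancedOn_boundary
  rw [Finset.coe_nonempty] at hBne
  rwa [Minimal.eq_of_le hA ⟨hBne, hsum⟩ (Finset.coe_subset.1 hBA)] at hB

end Segment

end Grapht

/-- A grapht admits an edge-partition into cycles and `T`-paths iff it is inner
Eulerian. -/
theorem edge_partition_iff_innerEulerian {V : Type u} {E : Type v} (G : Grapht V E) :
    (∃ As : Set (Set E),
      (∀ A ∈ As, (∃ C : G.Cycle, A = C.edgeSet) ∨
        ∃ P : G.Path, G.IsTPath P ∧ A = P.edgeSet) ∧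
      As.Pairwise Disjoint ∧ ⋃₀ As = Set.univ) ↔ G.InnerEulerian := by
  rw [Grapht.innerEulerian_iff_isBalancedOn_boundary]
  constructor
  · rintro ⟨As, hAs, hdisj, hcov⟩
    rw [← hcov]
    exact isBalancedOn_sUnion hdisj fun A hA =>
      Grapht.IsCycleOrTPath.isBalancedOn_boundary (hAs A hA)
  · intro hG
    refine hG.hasPartition_isCircuit.mono ?_
    rintro _ ⟨C, hC, rfl⟩
    exact Grapht.isCycleOrTPath_of_isCircuit hC
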